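/- Let X = T[x..x') and Y = T[y..y') be fragments of T ∈ Σ* with |X| ≥ 1 and |Y| < 2|X|, and assume the set {k ≥ 0 : |X̄_k| > k} has a maximum ℓ. Let m = y + ⌊|Y|/2⌋ (a middle position of Y), and let m_ℓ be the unique position with |exp(T_ℓ[0..m_ℓ))| ≤ m < |exp(T_ℓ[0..m_ℓ+1))|. Let e ∈ [m_ℓ..|T_ℓ|) be the largest position such that e − m_ℓ + 1 ≤ |X̄_ℓ| + ℓ and |shrink_{ℓ+1}(T_ℓ[m_ℓ..e+1))| ≤ 2ℓ+3, and let b ∈ [0..m_ℓ] be the smallest position such that m_ℓ − b + 1 ≤ |X̄_ℓ| + ℓ and |shrink_{ℓ+1}(T_ℓ[b..m_ℓ+1))| ≤ 2ℓ+3. Let b' ∈ [b..e+1] be minimal with y ≤ |exp(T_ℓ[0..b'))| and e' ≤ e be maximal with |exp(T_ℓ[0..e'+1))| ≤ y' (the proxy text is Y'_ℓ = T_ℓ[b'..e'+1), empty if b' > e'). Then for every position i with y ≤ i, i + |X| ≤ y', and T[i..i+|X|) = X, the unique position i_ℓ with |exp(T_ℓ[0..i_ℓ))| = i + |exp(L_0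 ⋯ L_{ℓ−1})| carries an occurrence of X̄_ℓ contained in the proxy text: b' ≤ i_ℓ and i_ℓ + |X̄_ℓ| ≤ e' + 1. -/

import Mathlib

namespace IPM

/-- The universal alphabet `𝒜`: least fixed point of `𝒜 = Σ ∪ (𝒜 × 𝒜) ∪ (𝒜 × ℤ_{≥2})`. -/
inductive UA (α : Type) where
  | sym  : α → UA α
  | pair : UA α → UA α → UA α
  | pow  : UA α → {m : ℕ // 2 ≤ m} → UA α
  deriving DecidableEq

variable {α : Type} [DecidableEq α]

/-- Expansion of a single symbol of the universal alphabet. -/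
def expand : UA α → List α
  | .sym c => [c]
  | .pair b c => expand b ++ expand c
  | .pow b m => (List.replicate m.1 (expand b)).flatten

/-- Expansion of a string of symbols (homomorphic extension). -/
def expandStr (T : List (UA α)) : List α := (T.map expand).flatten

/-- Decomposition of a string into blocks: a block boundary is placed between
adjacent symbols `a` and `b` unless `glue a b` holds. -/
def chunks {γ : Type} (glue : γ → γ → Bool) : List γ → List (List γ)
  | [] => []
  | [a] => [[a]]
  | a :: b :: rest =>
    match chunks glue (b :: rest) with
    | [] => [[a]]
    | blk :: G => if glue a b then (a :: blk) :: G else [a] :: blk :: G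

/-- Collapse a block: a length-1 block stays, a power block `A^m` (m ≥ 2) becomes the
symbol `(A, m)`, and a length-2 block `BC` with `B ≠ C` becomes the symbol `(B, C)`. -/
def collapse : List (UA α) → List (UA α)
  | [] => []
  | [a] => [a]
  | a :: b :: rest =>
    if (b :: rest).all (fun x => decide (x = a)) then
      [.pow a ⟨rest.length + 2, by omega⟩]
    else [.pair a b]

/-- Shrinking with respect to a glue relation: decompose into blocks and collapse them. -/
def shrinkWith (glue : UA α → UA α → Bool) (T : List (UA α)) : List (UA α) :=
  ((chunks glue T).map collapse).flatten

/-- In the `rle_B`-decomposition, no boundary is placed between `a` and `b` iff `a = b ∈ B`. -/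
def rleGlue (B : Set (UA α)) [DecidablePred (· ∈ B)] : UA α → UA α → Bool :=
  fun a b => decide (a = b ∧ a ∈ B)

/-- In the `pc_{L,R}`-decomposition, no boundary is placed between `a` and `b`
iff `a ∈ L` and `b ∈ R`. -/
def pcGlue (L R : Set (UA α)) [DecidablePred (· ∈ L)] [DecidablePred (· ∈ R)] :
    UA α → UA α → Bool :=
  fun a b => decide (a ∈ L ∧ b ∈ R)

/-- Restricted run-length encoding `rle_B`. -/
def rleC (B : Set (UA α)) [DecidablePred (· ∈ B)] (T : List (UA α)) : List (UA α) :=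
  shrinkWith (rleGlue B) T

/-- Restricted pair compression `pc_{L,R}`. -/
def pcC (L R : Set (UA α)) [DecidablePred (· ∈ L)] [DecidablePred (· ∈ R)]
    (T : List (UA α)) : List (UA α) :=
  shrinkWith (pcGlue L R) T


section Recompression

variable (Bs Ls Rs : ℕ → Set (UA α))
variable [∀ k, DecidablePred (· ∈ Bs k)] [∀ k, DecidablePred (· ∈ Ls k)]
variable [∀ k, DecidablePred (· ∈ Rs k)]

/-- The glue relation of `shrink_k`: run-length encoding `rle_{ℬ_k}` for odd `k`,
pair compression `pc_{ℒ_k,ℛ_k}` for even `k`. -/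
def glueK (k : ℕ) : UA α → UA α → Bool :=
  if k % 2 = 1 then rleGlue (Bs k) else pcGlue (Ls k) (Rs k)

/-- `shrink_k`: `rle_{ℬ_k}` for odd `k`, `pc_{ℒ_k,ℛ_k}` for even `k`. -/
def shrinkK (k : ℕ) (T : List (UA α)) : List (UA α) :=
  shrinkWith (glueK Bs Ls Rs k) T

/-- The restricted recompression sequence: `T_0 = T`, `T_k = shrink_k(T_{k-1})`. -/
def Tseq (T : List α) : ℕ → List (UA α)
  | 0 => T.map .sym
  | k + 1 => shrinkK Bs Ls Rs (k + 1) (Tseq T k)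

/-- Whether a string consists of copies of a single symbol. -/
def isUniform : List (UA α) → Bool
  | [] => true
  | a :: rest => rest.all (fun x => decide (x = a))

/-- The leftmost block of the `glue`-decomposition of `T`, or `ε` if there are no
blocks or that block consists of two distinct symbols. -/
def leftBlock (glue : UA α → UA α → Bool) (T : List (UA α)) : List (UA α) :=
  match chunks glue T with
  | [] => []
  | blk :: _ => if isUniform blk then blk else []

/-- The rightmost block of the `glue`-decomposition of `T`, or `ε` if there is at most
one block or that block consists of two distinct symbols. -/
def rightBlock (glue : UA α → UA α → Bool) (T : List (UA α)) : List (UA α) :=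
  let G := chunks glue T
  if G.length ≤ 1 then []
  else
    let blk := G.getLastD []
    if isUniform blk then blk else []

/-- The popped-sequence strings `X̄_k`: `X̄_0 = X` and
`X̄_{k+1} = shrink_{k+1}(X̄'_k)` where `X̄_k = L_k ⬝ X̄'_k ⬝ R_k`. -/
def Xbar (X : List α) : ℕ → List (UA α)
  | 0 => X.map .sym
  | k + 1 =>
    let Xb := Xbar X k
    let L := leftBlock (glueK Bs Ls Rs (k + 1)) Xb
    let R := rightBlock (glueK Bs Ls Rs (k + 1)) Xb
    shrinkK Bs Ls Rs (k + 1) ((Xb.drop L.length).take (Xb.length - L.length - R.length))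

/-- The popped-sequence block `L_k`. -/
def Lblk (X : List α) (k : ℕ) : List (UA α) :=
  leftBlock (glueK Bs Ls Rs (k + 1)) (Xbar Bs Ls Rs X k)

/-- The popped-sequence block `R_k`. -/
def Rblk (X : List α) (k : ℕ) : List (UA α) :=
  rightBlock (glueK Bs Ls Rs (k + 1)) (Xbar Bs Ls Rs X k)

end Recompression

/-- There is a block boundary between `U` and `V` (vacuously so if one of them is empty). -/
def Boundary {γ : Type} (g : γ → γ → Bool) (U V : List γ) : Prop :=
  ∀ a ∈ U.getLast?, ∀ b ∈ V.head?, g a b = false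

theorem Boundary.nil_right {γ : Type} (g : γ → γ → Bool) (U : List γ) : Boundary g U [] := by
  simp [Boundary]

theorem Boundary.nil_left {γ : Type} (g : γ → γ → Bool) (V : List γ) : Boundary g [] V := by
  simp [Boundary]

theorem Boundary.append_right {γ : Type} {g : γ → γ → Bool} {U V : List γ} (h : Boundary g U V)
    (hV : V ≠ []) (W : List γ) : Boundary g U (V ++ W) := by
  cases V with
  | nil => exact absurd rfl hV
  | cons a V => simpa [Boundary] using h

theorem Boundary.append_left {γ : Type} {g : γ → γ → Bool} {U V : List γ} (h : Boundary g U V)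
    (hU : U ≠ []) (P : List γ) : Boundary g (P ++ U) V := by
  intro a ha b hb
  rw [List.getLast?_append_of_ne_nil _ hU] at ha
  exact h a ha b hb

theorem Boundary.of_append_right {γ : Type} {g : γ → γ → Bool} {U V W : List γ}
    (h : Boundary g U (V ++ W)) : Boundary g U V := by
  cases V with
  | nil => exact .nil_right g U
  | cons a V => simpa [Boundary] using h

theorem Boundary.of_append_left {γ : Type} {g : γ → γ → Bool} {P U V : List γ}
    (h : Boundary g (P ++ U) V) : Boundary g U V := by
  rcases eq_or_ne U [] with rfl | hU
  · exact .nil_left g V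
  · intro a ha b hb
    exact h a (by rwa [List.getLast?_append_of_ne_nil _ hU]) b hb

theorem chunks_cons_cons {γ : Type} (g : γ → γ → Bool) (a b : γ) (W : List γ) :
    ∃ t G, chunks g (b :: W) = (b :: t) :: G ∧
      chunks g (a :: b :: W) = if g a b then (a :: b :: t) :: G else [a] :: (b :: t) :: G := by
  induction W generalizing a b with
  | nil => exact ⟨[], [], by simp [chunks], by simp [chunks]⟩
  | cons c W ih =>
    obtain ⟨t, G, _, h2⟩ := ih b c
    by_cases hg : g b c
    · refine ⟨c :: t, G, by rw [h2, if_pos hg], ?_⟩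
      rw [chunks, h2, if_pos hg]
    · refine ⟨[], (c :: t) :: G, by rw [h2, if_neg hg], ?_⟩
      rw [chunks, h2, if_neg hg]

theorem flatten_chunks {γ : Type} (g : γ → γ → Bool) (W : List γ) : (chunks g W).flatten = W := by
  induction W with
  | nil => rfl
  | cons a W ih =>
    cases W with
    | nil => rfl
    | cons b W =>
      obtain ⟨t, G, h1, h2⟩ := chunks_cons_cons g a b W
      rw [h1] at ih
      rw [h2]
      split_ifs <;> simp_all

theorem ne_nil_of_mem_chunks {γ : Type} {g : γ → γ → Bool} {W C : List γ}
    (h : C ∈ chunks g W) : C ≠ [] := by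
  induction W generalizing C with
  | nil => simp [chunks] at h
  | cons a W ih =>
    cases W with
    | nil => simp_all [chunks]
    | cons b W =>
      obtain ⟨t, G, h1, h2⟩ := chunks_cons_cons g a b W
      rw [h1] at ih
      rw [h2] at h
      split_ifs at h <;> simp at h ih <;> grind

theorem isChain_of_mem_chunks {γ : Type} {g : γ → γ → Bool} {W C : List γ}
    (h : C ∈ chunks g W) : C.IsChain (fun a b => g a b = true) := by
  induction W generalizing C with
  | nil => simp [chunks] at h
  | cons a W ih =>
    cases W with
    | nil => simp_all [chunks]
    | cons b W =>
      obtain ⟨t, G, h1, h2⟩ := chunks_cons_cons g a b W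
      rw [h1] at ih
      rw [h2] at h
      split_ifs at h with hg <;> simp at h ih <;> grind

theorem chunks_append {γ : Type} {g : γ → γ → Bool} {U V : List γ} (h : Boundary g U V) :
    chunks g (U ++ V) = chunks g U ++ chunks g V := by
  induction U with
  | nil => rfl
  | cons a U ih =>
    cases U with
    | nil =>
      cases V with
      | nil => rfl
      | cons b V =>
        obtain ⟨t, G, h1, h2⟩ := chunks_cons_cons g a b V
        have : g a b = false := h a (by simp) b (by simp)
        simp [h1, h2, this, chunks]
    | cons c U =>
      have ih := ih (fun x hx y hy => h x (by simpa using hx) y hy)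
      obtain ⟨t, G, h1, h2⟩ := chunks_cons_cons g a c (U ++ V)
      obtain ⟨t', G', h1', h2'⟩ := chunks_cons_cons g a c U
      simp only [List.cons_append] at ih ⊢
      rw [h1, h1'] at ih
      rw [h2, h2']
      simp only [List.cons_append, List.cons.injEq] at ih
      split_ifs <;> simp_all

theorem boundary_of_chunks_eq_append {γ : Type} {g : γ → γ → Bool} {W : List γ}
    {G₁ G₂ : List (List γ)} (h : chunks g W = G₁ ++ G₂) : Boundary g G₁.flatten G₂.flatten := by
  induction W generalizing G₁ with
  | nil =>
    simp only [chunks, List.nil_eq, List.append_eq_nil_iff] at h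
    simp [h, Boundary]
  | cons a W ih =>
    rcases eq_or_ne G₂ [] with rfl | hG₂
    · simp [Boundary]
    cases G₁ with
    | nil => simp [Boundary]
    | cons C G₁ =>
    cases W with
    | nil =>
      simp only [chunks, List.cons_append, List.cons.injEq, List.nil_eq,
        List.append_eq_nil_iff] at h
      exact absurd h.2.2 hG₂
    | cons b W =>
      obtain ⟨t, G, h1, h2⟩ := chunks_cons_cons g a b W
      rw [h2] at h
      split_ifs at h with hg
      · simp only [List.cons_append, List.cons.injEq] at h
        have := ih (G₁ := (b :: t) :: G₁) (by rw [h1, h.2]; rfl)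
        rw [← h.1]
        intro x hx
        exact this x (by simpa using hx)
      · simp only [List.cons_append, List.cons.injEq] at h
        rw [← h.1]
        cases G₁ with
        | nil =>
          rw [← h.2.trans (List.nil_append _)]
          simpa [Boundary] using hg
        | cons D G₁ =>
          have := ih (G₁ := D :: G₁) (by rw [h1, h.2])
          have hD : D = b :: t := (List.cons.inj h.2).1.symm
          subst hD
          intro x hx
          exact this x (by simpa using hx)

theorem length_chunks_cons_cons {γ : Type} (g : γ → γ → Bool) (a b : γ) (W : List γ) :
    (chunks g (a :: b :: W)).length =
      (chunks g (b :: W)).length + if g a b then 0 else 1 := by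
  obtain ⟨t, G, h1, h2⟩ := chunks_cons_cons g a b W
  rw [h1, h2]
  split_ifs <;> simp

theorem length_chunks_le_append {γ : Type} (g : γ → γ → Bool) (U V : List γ) :
    (chunks g U).length ≤ (chunks g (U ++ V)).length ∧
      (chunks g V).length ≤ (chunks g (U ++ V)).length ∧
      (chunks g (U ++ V)).length ≤ (chunks g U).length + (chunks g V).length := by
  induction U with
  | nil => simp [chunks]
  | cons a U ih =>
    cases U with
    | nil =>
      cases V with
      | nil => simp [chunks]
      | cons b V =>
        have := length_chunks_cons_cons g a b V
        obtain ⟨t, G, h1, -⟩ := chunks_cons_cons g a b V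
        simp only [List.cons_append, List.nil_append, this]
        simp only [chunks, h1, List.length_cons, List.length_nil]
        split_ifs <;> omega
    | cons c U =>
      have h1 := length_chunks_cons_cons g a c U
      have h2 := length_chunks_cons_cons g a c (U ++ V)
      simp only [List.cons_append] at ih ⊢
      omega

theorem length_chunks_le {γ : Type} (g : γ → γ → Bool) (W : List γ) :
    (chunks g W).length ≤ W.length := by
  induction W with
  | nil => simp [chunks]
  | cons a W ih =>
    have := (length_chunks_le_append g [a] W).2.2
    simp only [List.cons_append, List.nil_append, chunks, List.length_cons, List.length_nil] at *
    omega

theorem length_chunks_le_one {γ : Type} {g : γ → γ → Bool} {W : List γ}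
    (h : W.IsChain (fun a b => g a b = true)) : (chunks g W).length ≤ 1 := by
  induction W with
  | nil => simp [chunks]
  | cons a W ih =>
    cases W with
    | nil => simp [chunks]
    | cons b W =>
      rw [List.isChain_cons_cons] at h
      rw [length_chunks_cons_cons, if_pos h.1]
      exact ih h.2

theorem exists_chunks_append_left {γ : Type} (g : γ → γ → Bool) (U V : List γ) :
    ∃ G₁ G₂, chunks g (U ++ V) = G₁ ++ G₂ ∧ G₁.flatten <+: U ∧
      G₂.length ≤ (chunks g V).length := by
  induction U with
  | nil => exact ⟨[], chunks g V, by simp, by simp, le_rfl⟩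
  | cons a U ih =>
    obtain ⟨G₁, G₂, h1, h2, h3⟩ := ih
    rcases hW : U ++ V with _ | ⟨c, W⟩
    · rw [List.append_eq_nil_iff] at hW
      exact ⟨[[a]], [], by simp [hW, chunks], by simp [hW], by simp⟩
    · obtain ⟨t, G, e1, e2⟩ := chunks_cons_cons g a c W
      rw [hW, e1] at h1
      rw [List.cons_append, hW, e2]
      by_cases hg : g a c
      · rw [if_pos hg]
        cases G₁ with
        | nil =>
          refine ⟨[], (a :: c :: t) :: G, rfl, by simp, ?_⟩
          simpa [← h1.trans (List.nil_append _)] using h3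
        | cons D G₁ =>
          simp only [List.cons_append, List.cons.injEq] at h1
          refine ⟨(a :: c :: t) :: G₁, G₂, by simp [h1.2], ?_, h3⟩
          simpa [← h1.1] using h2
      · rw [if_neg hg]
        exact ⟨[a] :: G₁, G₂, by simp [h1], by simpa using h2, h3⟩

theorem exists_chunks_append_right {γ : Type} (g : γ → γ → Bool) (U V : List γ) :
    ∃ G₁ G₂, chunks g (U ++ V) = G₁ ++ G₂ ∧ U <+: G₁.flatten ∧
      G₁.length ≤ (chunks g U).length := by
  induction U with
  | nil => exact ⟨[], chunks g V, by simp, by simp, by simp⟩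
  | cons a U ih =>
    cases U with
    | nil =>
      cases V with
      | nil => exact ⟨[[a]], [], by simp [chunks], by simp, by simp [chunks]⟩
      | cons b V =>
        obtain ⟨t, G, -, e2⟩ := chunks_cons_cons g a b V
        simp only [List.cons_append, List.nil_append, e2]
        split_ifs
        · exact ⟨[a :: b :: t], G, rfl, by simp, by simp [chunks]⟩
        · exact ⟨[[a]], (b :: t) :: G, rfl, by simp, by simp [chunks]⟩
    | cons c U =>
      obtain ⟨G₁, G₂, h1, h2, h3⟩ := ih
      obtain ⟨t, G, e1, e2⟩ := chunks_cons_cons g a c (U ++ V)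
      simp only [List.cons_append] at h1 ⊢
      rw [e1] at h1
      rw [e2, length_chunks_cons_cons]
      cases G₁ with
      | nil => simp at h2
      | cons D G₁ =>
        simp only [List.cons_append, List.cons.injEq] at h1
        obtain ⟨rfl, rfl⟩ := h1
        split_ifs
        · exact ⟨(a :: c :: t) :: G₁, G₂, rfl, by simpa using h2, by simpa using h3⟩
        · exact ⟨[a] :: (c :: t) :: G₁, G₂, rfl, by simpa using h2, by simpa using h3⟩

/-- Every block of two or more symbols is either a run or a single pair. -/
def RunOrPair {γ : Type} (g : γ → γ → Bool) : Prop :=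
  (∀ a b, g a b = true → a = b) ∨ ∀ a b c, g a b = true → g b c = false

@[simp] theorem expandStr_nil {α : Type} : expandStr ([] : List (UA α)) = [] := rfl

@[simp] theorem expandStr_append {α : Type} (U V : List (UA α)) :
    expandStr (U ++ V) = expandStr U ++ expandStr V := by
  simp [expandStr]

theorem expandStr_map_sym {α : Type} (W : List α) : expandStr (W.map .sym) = W := by
  induction W with
  | nil => rfl
  | cons a W ih => simpa [expandStr, expand] using ih

theorem expand_length_pos {α : Type} (A : UA α) : 0 < (expand A).length := by
  induction A with
  | sym c => simp [expand]
  | pair B C hB hC => simp only [expand, List.length_append]; omega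
  | pow B m hB =>
    have := m.2
    simp only [expand, List.length_flatten, List.map_replicate, List.sum_replicate, smul_eq_mul]
    positivity

theorem length_expandStr_take_strictMono {α : Type} {W : List (UA α)} {p q : ℕ} (hpq : p < q)
    (hq : q ≤ W.length) :
    (expandStr (W.take p)).length < (expandStr (W.take q)).length := by
  have hp : p < W.length := by omega
  have h : W.take q = W.take p ++ (W[p] :: (W.drop (p + 1)).take (q - p - 1)) := by
    obtain ⟨d, rfl⟩ : ∃ d, q = p + (d + 1) := ⟨q - p - 1, by omega⟩
    rw [List.take_add, List.drop_eq_getElem_cons hp, List.take_succ_cons]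
    congr 3
    omega
  have := expand_length_pos W[p]
  rw [h]
  rw [expandStr_append, List.length_append]
  simp only [expandStr, List.map_cons, List.flatten_cons, List.length_append]
  omega

theorem length_expandStr_take_mono {α : Type} (W : List (UA α)) {p q : ℕ} (hpq : p ≤ q) :
    (expandStr (W.take p)).length ≤ (expandStr (W.take q)).length := by
  rw [show W.take q = W.take p ++ (W.drop p).take (q - p) by
    rw [← List.take_add]; congr 1; omega]
  simp

theorem length_expandStr_le_of_isPrefix {α : Type} {U V : List (UA α)} (h : U <+: V) :
    (expandStr U).length ≤ (expandStr V).length := by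
  obtain ⟨W, rfl⟩ := h
  simp

theorem expandStr_replicate {α : Type} (n : ℕ) (a : UA α) :
    expandStr (List.replicate n a) = (List.replicate n (expand a)).flatten := by
  simp [expandStr]

theorem isUniform_of_isChain_eq {α : Type} [DecidableEq α] {C : List (UA α)}
    (h : C.IsChain (fun a b => a = b)) : isUniform C = true := by
  induction C with
  | nil => rfl
  | cons a C ih =>
    cases C with
    | nil => rfl
    | cons b C =>
      rw [List.isChain_cons_cons] at h
      obtain ⟨rfl, h⟩ := h
      simpa [isUniform] using ih h

theorem eq_pair_of_not_isUniform {α : Type} [DecidableEq α] {g : UA α → UA α → Bool}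
    (hg : RunOrPair g) {C : List (UA α)} (hC : C.IsChain (fun a b => g a b = true))
    (hu : ¬isUniform C = true) :
    ∃ a b, C = [a, b] ∧ (∀ p, g p a = false) ∧ ∀ s, g b s = false := by
  rcases hg with hg | hg
  · exact absurd (isUniform_of_isChain_eq (hC.imp hg)) hu
  · match C, hC, hu with
    | [], _, hu => exact absurd rfl hu
    | [a], _, hu => exact absurd rfl hu
    | [a, b], hC, _ =>
      have hab : g a b = true := by simpa using hC
      refine ⟨a, b, rfl, fun p => ?_, fun s => hg a b s hab⟩
      by_contra h
      have := hg p a b (by simpa using h)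
      simp_all
    | a :: b :: c :: C, hC, _ =>
      simp only [List.isChain_cons_cons] at hC
      have := hg a b c hC.1
      simp_all

theorem expandStr_collapse {α : Type} [DecidableEq α] {g : UA α → UA α → Bool}
    (hg : RunOrPair g) {C : List (UA α)} (hC : C.IsChain (fun a b => g a b = true)) :
    expandStr (collapse C) = expandStr C := by
  by_cases hu : isUniform C = true
  · match C with
    | [] => rfl
    | [a] => rfl
    | a :: b :: t =>
      have h : a :: b :: t = List.replicate (t.length + 2) a := by
        rw [List.eq_replicate_iff]
        simpa [isUniform] using hu
      rw [collapse, if_pos (by simpa [isUniform] using hu)]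
      conv_rhs => rw [h, expandStr_replicate]
      simp [expandStr, expand]
  · obtain ⟨a, b, rfl, -, -⟩ := eq_pair_of_not_isUniform hg hC hu
    rw [collapse, if_neg (by simpa [isUniform] using hu)]
    simp [expandStr, expand]

theorem length_collapse {α : Type} [DecidableEq α] {C : List (UA α)} (h : C ≠ []) :
    (collapse C).length = 1 := by
  match C with
  | [] => exact absurd rfl h
  | [a] => rfl
  | a :: b :: t => rw [collapse]; split_ifs <;> rfl

theorem length_flatten_map_collapse {α : Type} [DecidableEq α] {G : List (List (UA α))}
    (h : ∀ C ∈ G, C ≠ []) : (G.map collapse).flatten.length = G.length := by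
  induction G with
  | nil => rfl
  | cons C G ih =>
    simp only [List.forall_mem_cons] at h
    simp only [List.map_cons, List.flatten_cons, List.length_append, length_collapse h.1, ih h.2,
      List.length_cons]
    omega

theorem expandStr_flatten_map_collapse {α : Type} [DecidableEq α] {g : UA α → UA α → Bool}
    (hg : RunOrPair g) {G : List (List (UA α))}
    (h : ∀ C ∈ G, C.IsChain (fun a b => g a b = true)) :
    expandStr (G.map collapse).flatten = expandStr G.flatten := by
  induction G with
  | nil => rfl
  | cons C G ih =>
    simp only [List.forall_mem_cons] at h
    simp [expandStr_collapse hg h.1, ih h.2]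

theorem length_shrinkWith {α : Type} [DecidableEq α] (g : UA α → UA α → Bool)
    (W : List (UA α)) : (shrinkWith g W).length = (chunks g W).length :=
  length_flatten_map_collapse fun _ => ne_nil_of_mem_chunks

theorem expandStr_shrinkWith {α : Type} [DecidableEq α] {g : UA α → UA α → Bool}
    (hg : RunOrPair g) (W : List (UA α)) : expandStr (shrinkWith g W) = expandStr W := by
  rw [shrinkWith, expandStr_flatten_map_collapse hg fun _ => isChain_of_mem_chunks,
    flatten_chunks]

theorem shrinkWith_append {α : Type} [DecidableEq α] {g : UA α → UA α → Bool}
    {U V : List (UA α)} (h : Boundary g U V) :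
    shrinkWith g (U ++ V) = shrinkWith g U ++ shrinkWith g V := by
  simp [shrinkWith, chunks_append h]

theorem exists_shrinkWith_append_left {α : Type} [DecidableEq α] {g : UA α → UA α → Bool}
    (hg : RunOrPair g) (U V : List (UA α)) :
    ∃ U' V', shrinkWith g (U ++ V) = U' ++ V' ∧
      (expandStr U').length ≤ (expandStr U).length ∧ V'.length ≤ (chunks g V).length := by
  obtain ⟨G₁, G₂, h1, h2, h3⟩ := exists_chunks_append_left g U V
  refine ⟨(G₁.map collapse).flatten, (G₂.map collapse).flatten, by simp [shrinkWith, h1], ?_, ?_⟩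
  · rw [expandStr_flatten_map_collapse hg fun C hC =>
      isChain_of_mem_chunks (h1 ▸ List.mem_append_left _ hC)]
    exact length_expandStr_le_of_isPrefix h2
  · rwa [length_flatten_map_collapse fun C hC =>
      ne_nil_of_mem_chunks (h1 ▸ List.mem_append_right _ hC)]

theorem exists_shrinkWith_append_right {α : Type} [DecidableEq α] {g : UA α → UA α → Bool}
    (hg : RunOrPair g) (U V : List (UA α)) :
    ∃ U' V', shrinkWith g (U ++ V) = U' ++ V' ∧
      (expandStr U).length ≤ (expandStr U').length ∧ U'.length ≤ (chunks g U).length := by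
  obtain ⟨G₁, G₂, h1, h2, h3⟩ := exists_chunks_append_right g U V
  refine ⟨(G₁.map collapse).flatten, (G₂.map collapse).flatten, by simp [shrinkWith, h1], ?_, ?_⟩
  · rw [expandStr_flatten_map_collapse hg fun C hC =>
      isChain_of_mem_chunks (h1 ▸ List.mem_append_left _ hC)]
    exact length_expandStr_le_of_isPrefix h2
  · rwa [length_flatten_map_collapse fun C hC =>
      ne_nil_of_mem_chunks (h1 ▸ List.mem_append_left _ hC)]

/-- Popping the outer blocks of `W` leaves a middle part whose ends are block boundaries in every
superstring of `W`. -/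
theorem exists_popped {α : Type} [DecidableEq α] (g : UA α → UA α → Bool) (W : List (UA α)) :
    ∃ M, W = leftBlock g W ++ M ++ rightBlock g W ∧
      (leftBlock g W).IsChain (fun a b => g a b = true) ∧
      (rightBlock g W).IsChain (fun a b => g a b = true) ∧
      (RunOrPair g → ∀ P S, Boundary g (P ++ leftBlock g W) M ∧
        Boundary g M (rightBlock g W ++ S)) := by
  have hflat := flatten_chunks g W
  have hchain := fun C => isChain_of_mem_chunks (g := g) (W := W) (C := C)
  have hne := fun C => ne_nil_of_mem_chunks (g := g) (W := W) (C := C)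
  have hbd := fun G₁ G₂ => boundary_of_chunks_eq_append (g := g) (W := W) (G₁ := G₁) (G₂ := G₂)
  rcases hG : chunks g W with _ | ⟨B, G⟩
  · obtain rfl : [] = W := by rwa [hG] at hflat
    exact ⟨[], by simp [leftBlock, rightBlock, chunks, Boundary]⟩
  rw [hG] at hflat hchain hne hbd
  have hB := hchain B (by simp)
  have hBne := hne B (by simp)
  rcases List.eq_nil_or_concat G with rfl | ⟨G, D, rfl⟩
  · obtain rfl : B = W := by simpa using hflat
    have hR : rightBlock g B = [] := by simp [rightBlock, hG]
    by_cases hu : isUniform B = true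
    · exact ⟨[], by simp [leftBlock, hG, hR, hu, hB, Boundary]⟩
    · refine ⟨B, by simp [leftBlock, hG, hR, hu], by simp [leftBlock, hG, hu], by simp [hR], ?_⟩
      intro hg P S
      obtain ⟨a, b, rfl, ha, hb⟩ := eq_pair_of_not_isUniform hg hB hu
      simp [Boundary, ha, hb]
  · rw [List.concat_eq_append] at hG hflat hchain hne hbd
    have hD := hchain D (by simp)
    have hDne := hne D (by simp)
    have hBbd : Boundary g B (G.flatten ++ D) := by
      simpa using hbd [B] (G ++ [D]) (by simp)
    have hDbd : Boundary g (B ++ G.flatten) D := by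
      simpa using hbd (B :: G) [D] (by simp)
    have hW : W = B ++ G.flatten ++ D := by simpa using hflat.symm
    have hL : leftBlock g W = if isUniform B then B else [] := by simp [leftBlock, hG]
    have hR : rightBlock g W = if isUniform D then D else [] := by
      simp only [rightBlock, hG]
      rw [if_neg (by simp), ← List.cons_append, List.getLastD_concat]
    refine ⟨(if isUniform B then [] else B) ++ G.flatten ++ (if isUniform D then [] else D),
      ?_, ?_, ?_, fun hg P S => ⟨?_, ?_⟩⟩
    · rw [hL, hR]
      conv_lhs => rw [hW]
      split_ifs <;> simp
    · rw [hL]; split_ifs <;> simp [hB]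
    · rw [hR]; split_ifs <;> simp [hD]
    · rw [hL]
      by_cases hu : isUniform B = true
      · simp only [hu, if_true, List.nil_append]
        refine Boundary.append_left ?_ hBne P
        split_ifs
        · simpa using hBbd.of_append_right
        · exact hBbd
      · obtain ⟨a, b, rfl, ha, hb⟩ := eq_pair_of_not_isUniform hg hB hu
        simp [Boundary, hu, ha]
    · rw [hR]
      by_cases hu : isUniform D = true
      · simp only [hu, if_true, List.append_nil]
        refine Boundary.append_right ?_ hDne S
        split_ifs
        · exact hDbd.of_append_left
        · exact hDbd
      · obtain ⟨a, b, rfl, ha, hb⟩ := eq_pair_of_not_isUniform hg hD hu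
        simp [Boundary, hu, hb]

theorem runOrPair_glueK {α : Type} [DecidableEq α] (Bs Ls Rs : ℕ → Set (UA α))
    [∀ k, DecidablePred (· ∈ Bs k)] [∀ k, DecidablePred (· ∈ Ls k)]
    [∀ k, DecidablePred (· ∈ Rs k)]
    (hdisj : ∀ k, k % 2 = 0 → Disjoint (Ls k) (Rs k)) (k : ℕ) :
    RunOrPair (glueK Bs Ls Rs k) := by
  unfold glueK
  split_ifs with hk
  · left
    intro a b h
    simp only [rleGlue, decide_eq_true_eq] at h
    exact h.1
  · right
    intro a b c h
    simp only [pcGlue, decide_eq_true_eq] at h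
    have := Set.disjoint_right.mp (hdisj k (by omega)) h.2
    simp [pcGlue, this]

theorem exists_Xbar_succ {α : Type} [DecidableEq α] (Bs Ls Rs : ℕ → Set (UA α))
    [∀ k, DecidablePred (· ∈ Bs k)] [∀ k, DecidablePred (· ∈ Ls k)]
    [∀ k, DecidablePred (· ∈ Rs k)] (X : List α) (k : ℕ) :
    ∃ M, Xbar Bs Ls Rs X k = Lblk Bs Ls Rs X k ++ M ++ Rblk Bs Ls Rs X k ∧
      Xbar Bs Ls Rs X (k + 1) = shrinkWith (glueK Bs Ls Rs (k + 1)) M ∧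
      (chunks (glueK Bs Ls Rs (k + 1)) (Lblk Bs Ls Rs X k)).length ≤ 1 ∧
      (chunks (glueK Bs Ls Rs (k + 1)) (Rblk Bs Ls Rs X k)).length ≤ 1 ∧
      (RunOrPair (glueK Bs Ls Rs (k + 1)) → ∀ P S,
        Boundary (glueK Bs Ls Rs (k + 1)) (P ++ Lblk Bs Ls Rs X k) M ∧
        Boundary (glueK Bs Ls Rs (k + 1)) M (Rblk Bs Ls Rs X k ++ S)) := by
  obtain ⟨M, hM, hL, hR, hbd⟩ :=
    exists_popped (glueK Bs Ls Rs (k + 1)) (Xbar Bs Ls Rs X k)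
  refine ⟨M, hM, ?_, length_chunks_le_one hL, length_chunks_le_one hR, hbd⟩
  simp only [Xbar, shrinkK]
  congr 1
  generalize leftBlock (glueK Bs Ls Rs (k + 1)) (Xbar Bs Ls Rs X k) = L at hM ⊢
  generalize rightBlock (glueK Bs Ls Rs (k + 1)) (Xbar Bs Ls Rs X k) = R at hM ⊢
  rw [hM, show (L ++ M ++ R).length - L.length - R.length = M.length by simp]
  simp

/-- Popping and shrinking loses at most the two outer blocks. -/
theorem length_chunks_Xbar_le {α : Type} [DecidableEq α] (Bs Ls Rs : ℕ → Set (UA α))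
    [∀ k, DecidablePred (· ∈ Bs k)] [∀ k, DecidablePred (· ∈ Ls k)]
    [∀ k, DecidablePred (· ∈ Rs k)] (X : List α) (k : ℕ) :
    (chunks (glueK Bs Ls Rs (k + 1)) (Xbar Bs Ls Rs X k)).length ≤
      (Xbar Bs Ls Rs X (k + 1)).length + 2 := by
  obtain ⟨M, hM, hX, hL, hR, -⟩ := exists_Xbar_succ Bs Ls Rs X k
  rw [hM, hX, length_shrinkWith]
  have h1 := (length_chunks_le_append (glueK Bs Ls Rs (k + 1))
    (Lblk Bs Ls Rs X k ++ M) (Rblk Bs Ls Rs X k)).2.2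
  have h2 := (length_chunks_le_append (glueK Bs Ls Rs (k + 1)) (Lblk Bs Ls Rs X k) M).2.2
  omega

/-- An occurrence of `X` at position `i` of `T` induces an occurrence of `X̄_k` in `T_k`, and at
most `k` symbols of `T_k` on either side of it meet the occurrence of `X`. -/
theorem exists_occurrence_Xbar {α : Type} [DecidableEq α] (Bs Ls Rs : ℕ → Set (UA α))
    [∀ k, DecidablePred (· ∈ Bs k)] [∀ k, DecidablePred (· ∈ Ls k)]
    [∀ k, DecidablePred (· ∈ Rs k)]
    (hdisj : ∀ k, k % 2 = 0 → Disjoint (Ls k) (Rs k)) (T X : List α) (i : ℕ)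
    (hi : i ≤ T.length) (hocc : (T.drop i).take X.length = X) (k : ℕ)
    (hne : Xbar Bs Ls Rs X k ≠ []) :
    ∃ P₁ P₂ S₁ S₂,
      Tseq Bs Ls Rs T k = P₁ ++ P₂ ++ Xbar Bs Ls Rs X k ++ S₁ ++ S₂ ∧
      (expandStr P₁).length ≤ i ∧ P₂.length ≤ k ∧ S₁.length ≤ k ∧
      (expandStr (P₁ ++ P₂)).length
        = i + (expandStr (((List.range k).map (Lblk Bs Ls Rs X)).flatten)).length ∧
      (expandStr (P₁ ++ P₂ ++ Xbar Bs Ls Rs X k)).length ≤ i + X.length ∧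
      i + X.length ≤ (expandStr (P₁ ++ P₂ ++ Xbar Bs Ls Rs X k ++ S₁)).length := by
  induction k with
  | zero =>
    refine ⟨(T.take i).map .sym, [], [], (T.drop (i + X.length)).map .sym, ?_, ?_, ?_⟩
    · simp only [Tseq, Xbar, List.append_nil, ← List.map_append]
      congr 1
      conv_lhs => rw [← List.take_append_drop i T, ← List.take_append_drop X.length (T.drop i)]
      rw [hocc, List.drop_drop, List.append_assoc]
    · rw [expandStr_map_sym]; exact List.length_take_le i T
    · simp [-List.map_take, expandStr_map_sym, Xbar, hi]
  | succ k ih =>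
    have hg := runOrPair_glueK Bs Ls Rs hdisj (k + 1)
    obtain ⟨M, hM, hX, hL, hR, hbd⟩ := exists_Xbar_succ Bs Ls Rs X k
    have hMne : M ≠ [] := by
      rintro rfl
      exact hne (hX.trans rfl)
    obtain ⟨P₁, P₂, S₁, S₂, hT, hP₁, hP₂, hS₁, hleft, hright, hcover⟩ :=
      ih (by rw [hM]; simp [hMne])
    rw [hM] at hT hright hcover
    obtain ⟨hbdL, hbdR⟩ := hbd hg (P₁ ++ P₂) (S₁ ++ S₂)
    set g := glueK Bs Ls Rs (k + 1)
    set L := Lblk Bs Ls Rs X k with hLdef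
    set R := Rblk Bs Ls Rs X k
    obtain ⟨P₁', P₂', hP, hP₁', hP₂'⟩ := exists_shrinkWith_append_left hg P₁ (P₂ ++ L)
    obtain ⟨S₁', S₂', hS, hS₁', hS₂'⟩ := exists_shrinkWith_append_right hg (R ++ S₁) S₂
    have hPexp : expandStr (P₁' ++ P₂') = expandStr (P₁ ++ (P₂ ++ L)) := by
      rw [← hP, expandStr_shrinkWith hg]
    have hMexp : expandStr (Xbar Bs Ls Rs X (k + 1)) = expandStr M := by
      rw [hX, expandStr_shrinkWith hg]
    have c1 := (length_chunks_le_append g P₂ L).2.2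
    have c2 := (length_chunks_le_append g R S₁).2.2
    have c3 := length_chunks_le g P₂
    have c4 := length_chunks_le g S₁
    refine ⟨P₁', P₂', S₁', S₂', ?_, by omega, by omega, by omega, ?_, ?_, ?_⟩
    · have hT' : Tseq Bs Ls Rs T k = (P₁ ++ P₂ ++ L) ++ (M ++ (R ++ (S₁ ++ S₂))) := by
        rw [hT]; simp only [List.append_assoc]
      rw [Tseq, shrinkK, hT', shrinkWith_append (hbdL.append_right hMne _),
        shrinkWith_append hbdR, ← hX, List.append_assoc P₁, hP, ← List.append_assoc R, hS]
      simp only [List.append_assoc]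
    · rw [hPexp, List.range_succ]
      simp only [expandStr_append, List.length_append, List.map_append, List.flatten_append,
        List.map_cons, List.map_nil, List.flatten_cons, List.flatten_nil, List.append_nil,
        ← hLdef] at hleft ⊢
      omega
    · rw [expandStr_append, hPexp, hMexp]
      simp only [expandStr_append, List.length_append] at hright ⊢
      omega
    · rw [expandStr_append, expandStr_append (P₁' ++ P₂'), hPexp, hMexp]
      simp only [expandStr_append, List.length_append] at hcover hS₁' ⊢
      omega

/-- With the proxy text `Y'_ℓ = T_ℓ[b'..e'+1)` defined as in the
proxy-text construction, every occurrence of `X` contained in `Y` induces an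
occurrence of `X̄_ℓ` (at the position `i_ℓ` stipulated by the occurrence-transfer
lemma) that is contained within the proxy text: `b' ≤ i_ℓ` and `i_ℓ + |X̄_ℓ| ≤ e'+1`. -/
theorem occurrences_in_proxy_text
    (Bs Ls Rs : ℕ → Set (UA α))
    [∀ k, DecidablePred (· ∈ Bs k)] [∀ k, DecidablePred (· ∈ Ls k)]
    [∀ k, DecidablePred (· ∈ Rs k)]
    (hdisj : ∀ k, k % 2 = 0 → Disjoint (Ls k) (Rs k))
    (T X Y : List α) (x x' y y' : ℕ)
    -- `X = T[x..x')` and `Y = T[y..y')` are fragments of `T`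
    (hx : x ≤ x') (hx' : x' ≤ T.length) (hX : X = (T.drop x).take (x' - x))
    (hy : y ≤ y') (hy' : y' ≤ T.length) (hY : Y = (T.drop y).take (y' - y))
    (hXlen : 1 ≤ X.length) (hYlen : Y.length < 2 * X.length)
    -- `ℓ = max{k ≥ 0 : |X̄_k| > k}`
    (l : ℕ) (hl : IsGreatest {k : ℕ | k < (Xbar Bs Ls Rs X k).length} l)
    -- `m = y + ⌊|Y|/2⌋`, a middle position of `Y`
    (m : ℕ) (hm : m = y + Y.length / 2)
    -- `m_ℓ` is the position of the ancestor of `T[m]` in `T_ℓ`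
    (ml : ℕ) (hml1 : ml < (Tseq Bs Ls Rs T l).length)
    (hml2 : (expandStr ((Tseq Bs Ls Rs T l).take ml)).length ≤ m)
    (hml3 : m < (expandStr ((Tseq Bs Ls Rs T l).take (ml + 1))).length)
    -- `e ∈ [m_ℓ..|T_ℓ|)` is the largest position such that `e − m_ℓ + 1 ≤ |X̄_ℓ| + ℓ`
    -- and `|shrink_{ℓ+1}(T_ℓ[m_ℓ..e+1))| ≤ 2ℓ+3`
    (e : ℕ) (he1 : ml ≤ e) (he2 : e < (Tseq Bs Ls Rs T l).length)
    (he3 : e - ml + 1 ≤ (Xbar Bs Ls Rs X l).length + l)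
    (he4 : (shrinkK Bs Ls Rs (l + 1)
        (((Tseq Bs Ls Rs T l).drop ml).take (e + 1 - ml))).length ≤ 2 * l + 3)
    (he5 : ∀ e2, e < e2 → e2 < (Tseq Bs Ls Rs T l).length →
      ¬(e2 - ml + 1 ≤ (Xbar Bs Ls Rs X l).length + l ∧
        (shrinkK Bs Ls Rs (l + 1)
          (((Tseq Bs Ls Rs T l).drop ml).take (e2 + 1 - ml))).length ≤ 2 * l + 3))
    -- `b ∈ [0..m_ℓ]` is the smallest position such that `m_ℓ − b + 1 ≤ |X̄_ℓ| + ℓ`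
    -- and `|shrink_{ℓ+1}(T_ℓ[b..m_ℓ+1))| ≤ 2ℓ+3`
    (b : ℕ) (hb1 : b ≤ ml)
    (hb2 : ml - b + 1 ≤ (Xbar Bs Ls Rs X l).length + l)
    (hb3 : (shrinkK Bs Ls Rs (l + 1)
        (((Tseq Bs Ls Rs T l).drop b).take (ml + 1 - b))).length ≤ 2 * l + 3)
    (hb4 : ∀ b2 < b,
      ¬(ml - b2 + 1 ≤ (Xbar Bs Ls Rs X l).length + l ∧
        (shrinkK Bs Ls Rs (l + 1)
          (((Tseq Bs Ls Rs T l).drop b2).take (ml + 1 - b2))).length ≤ 2 * l + 3))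
    -- `b' ∈ [b..e+1]` is minimal with `y ≤ |exp(T_ℓ[0..b'))|`
    (b' : ℕ) (hb'1 : b ≤ b') (hb'2 : b' ≤ e + 1)
    (hb'3 : y ≤ (expandStr ((Tseq Bs Ls Rs T l).take b')).length)
    (hb'4 : ∀ b2, b ≤ b2 → b2 ≤ e + 1 →
      y ≤ (expandStr ((Tseq Bs Ls Rs T l).take b2)).length → b' ≤ b2)
    -- `e' ≤ e` is maximal with `|exp(T_ℓ[0..e'+1))| ≤ y'`
    (e' : ℕ) (he'1 : e' ≤ e)
    (he'2 : (expandStr ((Tseq Bs Ls Rs T l).take (e' + 1))).length ≤ y')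
    (he'3 : ∀ e2, e2 ≤ e →
      (expandStr ((Tseq Bs Ls Rs T l).take (e2 + 1))).length ≤ y' → e2 ≤ e')
    -- an occurrence of `X` at position `i`, contained in `Y`
    (i : ℕ) (hiy : y ≤ i) (hiy' : i + X.length ≤ y')
    (hocc : (T.drop i).take X.length = X)
    -- `i_ℓ` is the position with `|exp(T_ℓ[0..i_ℓ))| = i + |exp(L_0 ⋯ L_{ℓ−1})|`
    (il : ℕ) (hil1 : il ≤ (Tseq Bs Ls Rs T l).length)
    (hil2 : (expandStr ((Tseq Bs Ls Rs T l).take il)).length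
      = i + (expandStr (((List.range l).map (Lblk Bs Ls Rs X)).flatten)).length) :
    b' ≤ il ∧ il + (Xbar Bs Ls Rs X l).length ≤ e' + 1 := by
  have hYl : Y.length = y' - y := by
    rw [hY, List.length_take, List.length_drop]; omega
  set W := Tseq Bs Ls Rs T l with hW
  set Z := Xbar Bs Ls Rs X l with hZ
  have hZpos : l < Z.length := hl.1
  have hnext : (Xbar Bs Ls Rs X (l + 1)).length ≤ l + 1 := by
    by_contra h
    have := hl.2 (show l + 1 ∈ _ from not_le.mp h)
    omega
  have hiT : i ≤ T.length := by omega
  have hmid : i ≤ m ∧ m < i + X.length := by omega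
  have hZchunks := length_chunks_Xbar_le Bs Ls Rs X l
  obtain ⟨P₁, P₂, S₁, S₂, hT, hP₁, hP₂, hS₁, hleft, hright, hcover⟩ :=
    exists_occurrence_Xbar Bs Ls Rs hdisj T X i hiT hocc l
      (List.ne_nil_of_length_pos (Nat.zero_lt_of_lt hZpos))
  rw [← hZ] at hT hright hcover hZchunks
  rw [← hW] at hT
  set g := glueK Bs Ls Rs (l + 1)
  have hlen : W.length = P₁.length + P₂.length + Z.length + S₁.length + S₂.length := by
    simp [hT]; omega
  have htP₁ : W.take P₁.length = P₁ := by simp [hT]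
  have htP : W.take (P₁.length + P₂.length) = P₁ ++ P₂ := by
    rw [hT, List.append_assoc _ S₁, List.append_assoc _ Z]; exact List.take_left' (by simp)
  have htZ : W.take (P₁.length + P₂.length + Z.length) = P₁ ++ P₂ ++ Z := by
    rw [hT, List.append_assoc _ S₁]; exact List.take_left' (by simp; omega)
  have htS : W.take (P₁.length + P₂.length + Z.length + S₁.length) = P₁ ++ P₂ ++ Z ++ S₁ := by
    rw [hT]; exact List.take_left' (by simp; omega)
  obtain rfl : il = P₁.length + P₂.length := by
    rw [← hleft, ← htP] at hil2
    rcases lt_trichotomy il (P₁.length + P₂.length) with h | h | h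
    · have := length_expandStr_take_strictMono (W := W) h (by omega)
      omega
    · exact h
    · have := length_expandStr_take_strictMono (W := W) h hil1
      omega
  have hml_lo : P₁.length ≤ ml := by
    by_contra h
    have := length_expandStr_take_mono W (p := ml + 1) (q := P₁.length) (by omega)
    rw [htP₁] at this
    omega
  have hml_hi : ml < P₁.length + P₂.length + Z.length + S₁.length := by
    by_contra h
    have := length_expandStr_take_mono W (not_lt.mp h)
    rw [htS] at this
    omega
  have he : P₁.length + P₂.length + Z.length ≤ e + 1 := by
    by_contra h
    refine he5 (P₁.length + P₂.length + Z.length - 1) (by omega) (by omega) ⟨by omega, ?_⟩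
    rw [shrinkK, length_shrinkWith]
    change (chunks g _).length ≤ _
    have hseg : (W.drop ml).take (P₁.length + P₂.length + Z.length - 1 + 1 - ml)
        = (P₂ ++ Z).drop (ml - P₁.length) := by
      rw [← List.drop_take, show P₁.length + P₂.length + Z.length - 1 + 1
        = P₁.length + P₂.length + Z.length by omega, htZ, List.append_assoc, List.drop_append,
        List.drop_eq_nil_of_le hml_lo, List.nil_append]
    have c1 := (length_chunks_le_append g ((P₂ ++ Z).take (ml - P₁.length))
      ((P₂ ++ Z).drop (ml - P₁.length))).2.1
    rw [List.take_append_drop] at c1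
    have c2 := (length_chunks_le_append g P₂ Z).2.2
    have c3 := length_chunks_le g P₂
    rw [hseg]
    omega
  have hb : b ≤ P₁.length + P₂.length := by
    by_contra h
    refine hb4 (P₁.length + P₂.length) (by omega) ⟨by omega, ?_⟩
    rw [shrinkK, length_shrinkWith]
    change (chunks g _).length ≤ _
    have hseg : (W.drop (P₁.length + P₂.length)).take (ml + 1 - (P₁.length + P₂.length))
        = (Z ++ S₁).take (ml + 1 - (P₁.length + P₂.length)) := by
      have hd : W.drop (P₁.length + P₂.length) = Z ++ S₁ ++ S₂ := by
        rw [hT, List.append_assoc, List.append_assoc, List.drop_left' (by simp),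
          List.append_assoc]
      rw [hd, List.take_append_of_le_length (by rw [List.length_append]; omega)]
    have c1 := (length_chunks_le_append g
      ((Z ++ S₁).take (ml + 1 - (P₁.length + P₂.length)))
      ((Z ++ S₁).drop (ml + 1 - (P₁.length + P₂.length)))).1
    rw [List.take_append_drop] at c1
    have c2 := (length_chunks_le_append g Z S₁).2.2
    have c3 := length_chunks_le g S₁
    rw [hseg]
    omega
  refine ⟨hb'4 _ hb (by omega) (by omega), ?_⟩
  have := he'3 (P₁.length + P₂.length + Z.length - 1) (by omega) (by
    rw [show P₁.length + P₂.length + Z.length - 1 + 1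
      = P₁.length + P₂.length + Z.length by omega, htZ]
    omega)
  omega

end IPM
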